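/- arXiv:1510.08711 — 4 statements merged into one kernel-verified Lean document; each statement's English description precedes it below -/
import Mathlib

section
/- A division ring D is weakly locally finite if and only if D, regarded as an algebra over its center, is a locally PI algebra. -/
/-- A division ring is *centrally finite* if it is a finite-dimensional
vector space over its own center. -/
def IsCentrallyFinite (E : Type*) [DivisionRing E] : Prop :=
  Module.Finite (Subring.center E) E

/-- A division ring is *weakly locally finite* if for every finite subset `S`,
the division subring generated by `S` is centrally finite. -/
def IsWeaklyLocallyFinite (D : Type*) [DivisionRing D] : Prop :=
  ∀ S : Finset D, IsCentrallyFinite (Subfield.closure (S : Set D))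

/-- `A` is a PI algebra over `k`: some nonzero noncommutative polynomial in `m ≥ 1`
variables over `k` vanishes identically on `A`. -/
def IsPIAlgebra (k A : Type*) [CommSemiring k] [Semiring A] [Algebra k A] : Prop :=
  ∃ m : ℕ, 0 < m ∧ ∃ f : FreeAlgebra k (Fin m), f ≠ 0 ∧
    ∀ v : Fin m → A, FreeAlgebra.lift k v f = 0

/-- `A` is locally PI over `k` if every finitely generated `k`-subalgebra of `A`
is a PI algebra. -/
def IsLocallyPI (k A : Type*) [CommRing k] [Ring A] [Algebra k A] : Prop :=
  ∀ S : Finset A, IsPIAlgebra k (Algebra.adjoin k (S : Set A))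
section Kap
variable {Q : Type*} [DivisionRing Q]

lemma kap_comm (A : Subring Q) (hA : Subfield.closure (A : Set Q) = ⊤) (q : Q)
    (h : ∀ a ∈ A, a * q = q * a) : q ∈ Subring.center Q := by
  rw [Subring.mem_center_iff]
  intro g
  have hg : g ∈ Subfield.closure (A : Set Q) := by rw [hA]; trivial
  induction hg using Subfield.closure_induction with
  | mem x hx => exact h x hx
  | one => simp
  | add x y _ _ hx hy => rw [add_mul, mul_add, hx, hy]
  | neg x _ hx => rw [neg_mul, mul_neg, hx]
  | inv x _ hx =>
    have : Commute x q := hx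
    exact this.inv_left₀
  | mul x y _ _ hx hy => rw [mul_assoc, hy, ← mul_assoc, hx, mul_assoc]

lemma kap_fin (A : Subring Q) (hA : Subfield.closure (A : Set Q) = ⊤)
    (V : Submodule (Subring.center Q) Q) (hV : V.FG) (h : ∀ x ∈ A, x ∈ V) :
    Module.Finite (Subring.center Q) Q := by
  set B := Algebra.adjoin (Subring.center Q) (A : Set Q) with hB
  have hBV : Subalgebra.toSubmodule B ≤ V := by
    rw [hB, Algebra.adjoin_eq_span, Submodule.span_le]
    intro x hx
    have : x ∈ A.toSubmonoid := by
      have := Submonoid.closure_eq A.toSubmonoid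
      rw [← this]; exact hx
    exact h x this
  have : Module.Finite (Subring.center Q) V := Module.Finite.iff_fg.2 hV
  have : Module.Finite (Subring.center Q) (Subalgebra.toSubmodule B) :=
    Submodule.finiteDimensional_of_le hBV
  have : Module.Finite (Subring.center Q) B := this
  have hinv : ∀ x ∈ B, x⁻¹ ∈ B := by
    intro x hx
    by_cases h0 : x = 0
    · simp [h0]
    let L : B →ₗ[Subring.center Q] B := LinearMap.mulLeft _ (⟨x, hx⟩ : B)
    have hL : Function.Injective L := by
      intro a b hab
      have : x * (a : Q) = x * b := congrArg Subtype.val hab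
      exact Subtype.ext (mul_left_cancel₀ h0 this)
    obtain ⟨y, hy⟩ := (LinearMap.injective_iff_surjective.1 hL) 1
    have hy' : x * (y : Q) = 1 := congrArg Subtype.val hy
    rw [inv_eq_of_mul_eq_one_right hy']
    exact y.2
  let T : Subfield Q := { B.toSubring with inv_mem' := hinv }
  have hT : T = ⊤ := by
    rw [eq_top_iff, ← hA, Subfield.closure_le]
    exact Algebra.subset_adjoin
  have hVt : V = ⊤ := by
    rw [eq_top_iff]
    intro x _
    apply hBV
    have : x ∈ T := by rw [hT]; trivial
    exact this
  rw [Module.finite_def, ← hVt]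
  exact hV

/-- finite rank generalized linear maps with independent right coefficients vanish -/
lemma kap_indep (A : Subring Q) (hA : Subfield.closure (A : Set Q) = ⊤)
    (hinf : ¬ Module.Finite (Subring.center Q) Q) {ι : Type*} (b : ι → Q)
    (hb : LinearIndependent (Subring.center Q) b) (s : Finset ι) :
    ∀ a : ι → Q, (∃ W : Submodule (Subring.center Q) Q, W.FG ∧
      ∀ x ∈ A, ∑ k ∈ s, a k * x * b k ∈ W) → ∀ k ∈ s, a k = 0 := by
  classical
  induction s using Finset.induction_on with
  | empty => simp
  | insert j s hj ih =>
    rintro a ⟨W, hW, h⟩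
    by_cases haj : a j = 0
    · have := ih a ⟨W, hW, fun x hx => by simpa [Finset.sum_insert hj, haj] using h x hx⟩
      simpa [haj] using this
    exfalso
    -- normalise
    let c : ι → Q := fun k => (a j)⁻¹ * a k
    have hcj : c j = 1 := inv_mul_cancel₀ haj
    let W' := W.map (LinearMap.mulLeft (Subring.center Q) (a j)⁻¹)
    have hW' : W'.FG := hW.map _
    have h' : ∀ x ∈ A, ∑ k ∈ insert j s, c k * x * b k ∈ W' := by
      intro x hx
      refine ⟨_, h x hx, ?_⟩
      simp [c, mul_assoc]
    have hcen : ∀ k ∈ insert j s, c k ∈ Subring.center Q := by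
      intro k hk
      rcases Finset.mem_insert.1 hk with rfl | hk
      · rw [hcj]; exact one_mem _
      apply kap_comm A hA
      intro y hy
      have := ih (fun k => y * c k - c k * y)
        ⟨W'.map (LinearMap.mulLeft (Subring.center Q) y) ⊔ W', (hW'.map _).sup hW', ?_⟩ k hk
      · exact sub_eq_zero.1 this
      intro x hx
      have h1 := h' x hx
      have h2 := h' (y * x) (A.mul_mem hy hx)
      have h3 : ∑ k ∈ s, (y * c k - c k * y) * x * b k
          = y * (∑ k ∈ insert j s, c k * x * b k) - ∑ k ∈ insert j s, c k * (y * x) * b k := by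
        rw [Finset.mul_sum, ← Finset.sum_sub_distrib, Finset.sum_insert hj, hcj]
        simp [sub_mul, mul_assoc]
      rw [h3]
      exact Submodule.sub_mem _ (Submodule.mem_sup_left ⟨_, h1, rfl⟩) (Submodule.mem_sup_right h2)
    have hb0 : ∑ k ∈ insert j s, c k * b k ≠ 0 := by
      intro h0
      have := linearIndependent_iff'.1 hb (insert j s)
        (fun k => if hk : k ∈ insert j s then ⟨c k, hcen k hk⟩ else 0) (by
          rw [← h0]
          refine Finset.sum_congr rfl fun k hk => ?_
          rw [dif_pos hk]; rfl) j (Finset.mem_insert_self _ _)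
      rw [dif_pos (Finset.mem_insert_self _ _)] at this
      have h1 := congrArg Subtype.val this
      simp [hcj] at h1
    apply hinf
    refine kap_fin A hA (W'.map (LinearMap.mulRight (Subring.center Q)
      (∑ k ∈ insert j s, c k * b k)⁻¹)) (hW'.map _) ?_
    intro x hx
    refine ⟨_, h' x hx, ?_⟩
    have : ∑ k ∈ insert j s, c k * x * b k = x * ∑ k ∈ insert j s, c k * b k := by
      rw [Finset.mul_sum]
      refine Finset.sum_congr rfl fun k hk => ?_
      rw [← Subring.mem_center_iff.1 (hcen k hk) x, mul_assoc]
    rw [this, LinearMap.mulRight_apply, mul_assoc, mul_inv_cancel₀ hb0, mul_one]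

lemma kap_rank (A : Subring Q) (hA : Subfield.closure (A : Set Q) = ⊤)
    (hinf : ¬ Module.Finite (Subring.center Q) Q) {ι κ : Type*}
    (B : Module.Basis ι (Subring.center Q) Q) (i : ι)
    (s : Finset κ) (a b : κ → Q) (W : Submodule (Subring.center Q) Q) (hW : W.FG)
    (h : ∀ x ∈ A, ∑ k ∈ s, a k * x * b k ∈ W) :
    ∑ k ∈ s, (B.coord i (b k) : Q) * a k = 0 := by
  classical
  let t : Finset ι := insert i (s.biUnion fun k => (B.repr (b k)).support)
  refine kap_indep A hA hinf B B.linearIndependent t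
    (fun j => ∑ k ∈ s, (B.coord j (b k) : Q) * a k) ⟨W, hW, ?_⟩ i (Finset.mem_insert_self _ _)
  intro x hx
  convert h x hx using 1
  simp_rw [Finset.sum_mul]
  rw [Finset.sum_comm]
  refine Finset.sum_congr rfl fun k hk => ?_
  have hbk : b k = ∑ j ∈ t, (B.coord j (b k) : Q) * B j := by
    conv_lhs => rw [← B.linearCombination_repr (b k), Finsupp.linearCombination_apply]
    rw [Finsupp.sum_of_support_subset _ (s := t)]
    · rfl
    · intro j hj
      exact Finset.mem_insert_of_mem (Finset.mem_biUnion.2 ⟨k, hk, hj⟩)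
    · simp
  conv_rhs => rw [hbk, Finset.mul_sum]
  refine Finset.sum_congr rfl fun j _ => ?_
  have hc := Subring.mem_center_iff.1 (B.coord j (b k)).2
  rw [← mul_assoc, hc (a k * x), mul_assoc, mul_assoc, mul_assoc, mul_assoc]

lemma kap_main (A : Subring Q) (hA : Subfield.closure (A : Set Q) = ⊤)
    (hinf : ¬ Module.Finite (Subring.center Q) Q) {ι : Type*} [DecidableEq ι] (n : ℕ) :
    ∀ (W : Finset (List ι)) (_ : ∀ w ∈ W, w.Nodup ∧ w.length ≤ n)
      (μ : List ι → (ι → A) → Subring.center Q)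
      (_ : ∀ w ∈ W, ∀ x y : ι → A, (∀ j, j ∉ w → x j = y j) → μ w x = μ w y)
      (_ : ∀ x : ι → A, ∑ w ∈ W, (μ w x : Q) * (w.map fun j => (x j : Q)).prod = 0),
      ∀ w ∈ W, w.length = n → ∀ x, μ w x = 0 := by
  have := Classical.decEq Q
  induction n with
  | zero =>
    intro W hW μ hμ h w hw hwn x
    have : W = {[]} := by
      refine Finset.eq_singleton_iff_unique_mem.2 ⟨?_, fun v hv => ?_⟩
      · rwa [List.length_eq_zero_iff.1 hwn] at hw
      · exact List.length_eq_zero_iff.1 (Nat.le_zero.1 (hW v hv).2)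
    have h1 := h x
    rw [List.length_eq_zero_iff.1 hwn]
    rw [this] at h1
    simpa using h1
  | succ n ih =>
    intro W hW μ hμ h w0 hw0 hwn x0
    obtain ⟨p0, i, rfl⟩ : ∃ p i, w0 = p ++ [i] := by
      rcases List.eq_nil_or_concat' w0 with h | h
      · simp [h] at hwn
      · exact h
    have hp0 : p0.length = n := by simpa using hwn
    let B := Module.Basis.ofVectorSpace (Subring.center Q) Q
    obtain ⟨j, hj⟩ : ∃ j, B.coord j 1 ≠ 0 := by
      by_contra! hc
      exact one_ne_zero (α := Q) (B.ext_elem fun j => by simpa using hc j)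
    let Wi := W.filter (i ∈ ·)
    let pre : List ι → List ι := fun w => w.takeWhile (· ≠ i)
    let suf : List ι → List ι := fun w => (w.dropWhile (· ≠ i)).tail
    have hsplit : ∀ w ∈ Wi, w = pre w ++ i :: suf w := by
      intro w hw
      have hi := (Finset.mem_filter.1 hw).2
      have h1 : w.dropWhile (· ≠ i) ≠ [] := by
        rw [Ne, List.dropWhile_eq_nil_iff]
        push Not
        exact ⟨i, hi, by simp⟩
      have h2 : (w.dropWhile (· ≠ i)).head h1 = i := by
        have := List.head_dropWhile_not (fun j => decide (j ≠ i)) h1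
        simpa using this
      have h3 := List.takeWhile_append_dropWhile (p := fun j => decide (j ≠ i)) (l := w)
      have h4 := List.cons_head_tail h1
      rw [h2] at h4
      conv_lhs => rw [← h3, ← h4]
    have hnd : ∀ w ∈ Wi, (pre w).Nodup ∧ (suf w).Nodup ∧ i ∉ pre w ∧ i ∉ suf w ∧
        (∀ k ∈ pre w, k ∉ suf w) ∧ (pre w).length + (suf w).length ≤ n := by
      intro w hw
      have h1 := hW w (Finset.mem_filter.1 hw).1
      rw [hsplit w hw] at h1
      simp only [List.nodup_append, List.nodup_cons, List.length_append, List.length_cons,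
        List.mem_cons] at h1
      grind
    have key : ∀ x : ι → A, ∑ w ∈ Wi, (B.coord j ((suf w).map fun k => (x k : Q)).prod : Q) *
        ((μ w x : Q) * ((pre w).map fun k => (x k : Q)).prod) = 0 := by
      intro x
      refine kap_rank A hA hinf B j Wi (fun w => (μ w x : Q) * ((pre w).map fun k => (x k : Q)).prod)
        (fun w => ((suf w).map fun k => (x k : Q)).prod)
        (Submodule.span _ ((W.image fun w => (w.map fun k => (x k : Q)).prod : Finset Q) : Set Q))
        ⟨_, rfl⟩ ?_
      intro y hy
      have hx := h (Function.update x i ⟨y, hy⟩)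
      rw [← Finset.sum_filter_add_sum_filter_not W (i ∈ ·)] at hx
      have hmap : ∀ w : List ι, i ∉ w →
          (w.map fun k => ((Function.update x i ⟨y, hy⟩ k : A) : Q)) = w.map fun k => (x k : Q) := by
        intro w hw
        refine List.map_congr_left fun k hk => ?_
        rw [Function.update_of_ne]
        rintro rfl; exact hw hk
      have e1 : ∑ w ∈ Wi, (μ w x : Q) * ((pre w).map fun k => (x k : Q)).prod * y *
          ((suf w).map fun k => (x k : Q)).prod = ∑ w ∈ W.filter (i ∈ ·),
          (μ w (Function.update x i ⟨y, hy⟩) : Q) *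
            (w.map fun k => ((Function.update x i ⟨y, hy⟩ k : A) : Q)).prod := by
        refine Finset.sum_congr rfl fun w hw => ?_
        have hh := hnd w hw
        have hmu : μ w (Function.update x i ⟨y, hy⟩) = μ w x := by
          apply hμ w (Finset.mem_filter.1 hw).1
          intro k hk
          rw [Function.update_of_ne]
          rintro rfl; exact hk (Finset.mem_filter.1 hw).2
        rw [hmu]
        have hm : (w.map fun k => ((Function.update x i ⟨y, hy⟩ k : A) : Q)) =
            ((pre w ++ i :: suf w).map fun k => ((Function.update x i ⟨y, hy⟩ k : A) : Q)) := by
          rw [← hsplit w hw]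
        rw [hm, List.map_append, List.map_cons, hmap _ hh.2.2.1, hmap _ hh.2.2.2.1, List.prod_append,
          List.prod_cons, Function.update_self]
        simp only [mul_assoc]
      rw [e1, eq_neg_of_add_eq_zero_left hx]
      refine Submodule.neg_mem _ (Submodule.sum_mem _ fun w hw => ?_)
      rw [hmap _ (Finset.mem_filter.1 hw).2]
      refine Submodule.smul_mem _ (μ w (Function.update x i ⟨y, hy⟩)) (Submodule.subset_span ?_)
      exact Finset.mem_coe.2 (Finset.mem_image_of_mem _ (Finset.mem_filter.1 hw).1)
    let μ' : List ι → (ι → A) → Subring.center Q := fun p x =>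
      ∑ w ∈ Wi.filter (pre · = p), B.coord j ((suf w).map fun k => (x k : Q)).prod * μ w x
    have hw0i : p0 ++ [i] ∈ Wi := Finset.mem_filter.2 ⟨hw0, by simp⟩
    have hprew0 : pre (p0 ++ [i]) = p0 := by
      have h1 := hsplit _ hw0i
      have h2 := hnd _ hw0i
      have h3 : i ∉ p0 := by
        have := (hW _ hw0).1
        simp only [List.nodup_append] at this
        grind
      have : ∀ k ∈ p0, decide (k ≠ i) = true := by
        intro k hk
        simp only [decide_eq_true_eq]
        rintro rfl; exact h3 hk
      simp only [pre]
      rw [List.takeWhile_append_of_pos this]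
      simp
    have hfin := ih (Wi.image pre) ?_ μ' ?_ ?_ p0
      (Finset.mem_image.2 ⟨_, hw0i, hprew0⟩) hp0 x0
    · have hfil : Wi.filter (pre · = p0) = {p0 ++ [i]} := by
        refine Finset.eq_singleton_iff_unique_mem.2 ⟨Finset.mem_filter.2 ⟨hw0i, hprew0⟩, ?_⟩
        intro w hw
        obtain ⟨hw1, hw2⟩ := Finset.mem_filter.1 hw
        have h1 := hsplit w hw1
        have h2 := (hnd w hw1).2.2.2.2.2
        rw [hw2] at h1 h2
        have : suf w = [] := List.length_eq_zero_iff.1 (by omega)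
        rw [h1, this]
      have hs : suf (p0 ++ [i]) = [] := by
        have h2 := (hnd _ hw0i).2.2.2.2.2
        rw [hprew0] at h2
        exact List.length_eq_zero_iff.1 (by omega)
      simp only [μ', hfil, Finset.sum_singleton, hs, List.map_nil, List.prod_nil] at hfin
      exact (mul_eq_zero.1 hfin).resolve_left hj
    · intro p hp
      obtain ⟨w, hw, rfl⟩ := Finset.mem_image.1 hp
      have := hnd w hw
      exact ⟨this.1, by omega⟩
    · intro p hp x y hxy
      refine Finset.sum_congr rfl fun w hw => ?_
      obtain ⟨hw1, rfl⟩ := Finset.mem_filter.1 hw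
      have h1 := hsplit w hw1
      have h2 := hnd w hw1
      congr 1
      · congr 2
        refine List.map_congr_left fun k hk => ?_
        rw [hxy k fun hk' => h2.2.2.2.2.1 k hk' hk]
      · apply hμ w (Finset.mem_filter.1 hw1).1
        intro k hk
        apply hxy
        intro hk'
        apply hk
        rw [h1]
        simp [hk']
    · intro x
      rw [← key x, ← Finset.sum_fiberwise_of_maps_to (s := Wi) (t := Wi.image pre) (g := pre)
        (fun w hw => Finset.mem_image_of_mem _ hw)]
      refine Finset.sum_congr rfl fun p _ => ?_
      simp only [μ', AddSubmonoidClass.coe_finsetSum, Finset.sum_mul]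
      refine Finset.sum_congr rfl fun w hw => ?_
      rw [(Finset.mem_filter.1 hw).2, Subring.coe_mul, mul_assoc]


/-- lists over `κ` mapping to a given list -/
def kapLifts {κ ι : Type*} [Fintype κ] [DecidableEq κ] [DecidableEq ι] (g : κ → ι) :
    List ι → Finset (List κ)
  | [] => {[]}
  | a :: u => ((Finset.univ.filter fun k => g k = a) ×ˢ kapLifts g u).image fun p => p.1 :: p.2

lemma mem_kapLifts {κ ι : Type*} [Fintype κ] [DecidableEq κ] [DecidableEq ι] (g : κ → ι)
    (u : List ι) : ∀ v : List κ, v ∈ kapLifts g u ↔ v.map g = u := by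
  induction u with
  | nil => intro v; simp [kapLifts]
  | cons a u ih =>
    intro v
    cases v with
    | nil => simp [kapLifts]
    | cons b v => simp [kapLifts, ih]

lemma prod_kapLifts {κ ι R : Type*} [Fintype κ] [DecidableEq κ] [DecidableEq ι] [Semiring R]
    (g : κ → ι) (y : κ → R) (u : List ι) :
    (u.map fun i => ∑ k ∈ Finset.univ.filter (fun k => g k = i), y k).prod =
      ∑ v ∈ kapLifts g u, (v.map y).prod := by
  induction u with
  | nil => simp [kapLifts]
  | cons a u ih =>
    rw [List.map_cons, List.prod_cons, ih, kapLifts, Finset.sum_image, Finset.sum_product,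
      Finset.sum_mul_sum]
    · simp
    · rintro ⟨a, b⟩ _ ⟨c, d⟩ _ h
      simpa using h

lemma kap_full (A : Subring Q) {κ : Type*} [DecidableEq κ] (W : Finset (List κ))
    (c : List κ → Subring.center Q)
    (h : ∀ y : κ → A, ∑ w ∈ W, (c w : Q) * (w.map fun k => (y k : Q)).prod = 0) (J : Finset κ) :
    ∀ y : κ → A, ∑ w ∈ W.filter (fun w => J ⊆ w.toFinset),
      (c w : Q) * (w.map fun k => (y k : Q)).prod = 0 := by
  induction J using Finset.induction_on with
  | empty => simpa using h
  | insert j J hj ih =>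
    intro y
    have h1 := ih y
    have h2 := ih (Function.update y j 0)
    rw [← Finset.sum_filter_add_sum_filter_not _ (j ∈ ·)] at h1 h2
    have h3 : ∑ w ∈ (W.filter (fun w => J ⊆ w.toFinset)).filter (j ∈ ·),
        (c w : Q) * (w.map fun k => ((Function.update y j 0 k : A) : Q)).prod = 0 := by
      refine Finset.sum_eq_zero fun w hw => ?_
      rw [List.prod_eq_zero, mul_zero]
      exact List.mem_map.2 ⟨j, (Finset.mem_filter.1 hw).2, by simp⟩
    have h4 : ∑ w ∈ (W.filter (fun w => J ⊆ w.toFinset)).filter (j ∉ ·),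
        (c w : Q) * (w.map fun k => ((Function.update y j 0 k : A) : Q)).prod =
        ∑ w ∈ (W.filter (fun w => J ⊆ w.toFinset)).filter (j ∉ ·),
        (c w : Q) * (w.map fun k => (y k : Q)).prod := by
      refine Finset.sum_congr rfl fun w hw => ?_
      congr 2
      refine List.map_congr_left fun k hk => ?_
      rw [Function.update_of_ne]
      rintro rfl; exact (Finset.mem_filter.1 hw).2 hk
    rw [h3, zero_add, h4] at h2
    rw [h2, add_zero, Finset.filter_filter] at h1
    convert h1 using 2
    ext w
    simp only [Finset.mem_filter, Finset.insert_subset_iff, List.mem_toFinset]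
    tauto

theorem kap_theorem (A : Subring Q) (hA : Subfield.closure (A : Set Q) = ⊤)
    {ι : Type*} [DecidableEq ι] (W : Finset (List ι)) (c : List ι → Subring.center Q)
    (hc : ∃ w ∈ W, c w ≠ 0)
    (h : ∀ x : ι → A, ∑ w ∈ W, (c w : Q) * (w.map fun k => (x k : Q)).prod = 0) :
    Module.Finite (Subring.center Q) Q := by
  by_contra hinf
  have := Classical.decEq Q
  have : DecidablePred (fun w => c w ≠ 0) := Classical.decPred _
  -- reduce to nonzero coefficients
  have hc' : (W.filter (c · ≠ 0)).Nonempty := by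
    obtain ⟨w, hw, hw'⟩ := hc
    exact ⟨w, Finset.mem_filter.2 ⟨hw, hw'⟩⟩
  have h' : ∀ x : ι → A, ∑ w ∈ W.filter (c · ≠ 0),
      (c w : Q) * (w.map fun k => (x k : Q)).prod = 0 := by
    intro x
    rw [Finset.sum_filter_of_ne, h x]
    intro w _ hne h0
    apply hne
    rw [h0]; simp
  obtain ⟨w0, hw0, hmax⟩ := Finset.exists_max_image _ List.length hc'
  let g : Fin w0.length → ι := w0.get
  let W1 := (W.filter (c · ≠ 0)).biUnion (kapLifts g)
  have hW1 : ∀ v ∈ W1, v.map g ∈ W.filter (c · ≠ 0) := by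
    intro v hv
    obtain ⟨u, hu, hv⟩ := Finset.mem_biUnion.1 hv
    rw [mem_kapLifts] at hv
    rwa [hv]
  have h1 : ∀ y : Fin w0.length → A, ∑ v ∈ W1, (c (v.map g) : Q) *
      (v.map fun k => (y k : Q)).prod = 0 := by
    intro y
    rw [← h' (fun i => ∑ k ∈ Finset.univ.filter (fun k => g k = i), y k), Finset.sum_biUnion]
    · refine Finset.sum_congr rfl fun u _ => ?_
      simp only [AddSubmonoidClass.coe_finsetSum]
      rw [prod_kapLifts g (fun k => (y k : Q)), Finset.mul_sum]
      refine Finset.sum_congr rfl fun v hv => ?_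
      rw [(mem_kapLifts g u v).1 hv]
    · intro u _ u' _ hne
      rw [Function.onFun, Finset.disjoint_left]
      intro v hv hv'
      rw [mem_kapLifts] at hv hv'
      exact hne (hv.symm.trans hv')
  have h2 := kap_full A W1 (fun v => c (v.map g)) h1 Finset.univ
  have hw0g : (List.finRange w0.length).map g = w0 := List.map_get_finRange w0
  have h3 := kap_main A hA hinf w0.length _ ?_ (fun v _ => c (v.map g)) (fun _ _ _ _ _ => rfl) h2
    (List.finRange w0.length) ?_ (by simp) 0
  · rw [hw0g] at h3
    exact (Finset.mem_filter.1 hw0).2 h3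
  · intro v hv
    obtain ⟨hv1, hv2⟩ := Finset.mem_filter.1 hv
    have hl : v.length ≤ w0.length := by
      have := hmax _ (hW1 v hv1)
      simpa using this
    refine ⟨?_, hl⟩
    have hfs : v.toFinset = Finset.univ := Finset.univ_subset_iff.1 hv2
    have h5 : v.toFinset.card = w0.length := by rw [hfs]; simp
    rw [List.card_toFinset] at h5
    rw [← List.dedup_eq_self]
    exact (List.dedup_sublist v).eq_of_length_le (by omega)
  · refine Finset.mem_filter.2 ⟨Finset.mem_biUnion.2 ⟨w0, hw0, ?_⟩, fun k _ => by simp⟩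
    rw [mem_kapLifts, hw0g]

end Kap

lemma freeAlgebra_expand {k X : Type*} [CommRing k] (f : FreeAlgebra k X) (hf : f ≠ 0) :
    ∃ (W : Finset (List X)) (c : List X → k), (∃ w ∈ W, c w ≠ 0) ∧
      ∀ {R : Type*} [Ring R] [Algebra k R] (v : X → R),
        FreeAlgebra.lift k v f = ∑ w ∈ W, algebraMap k R (c w) * (w.map v).prod := by
  let e := FreeAlgebra.equivMonoidAlgebraFreeMonoid (R := k) (X := X)
  have he : e f ≠ 0 := by simpa using hf
  refine ⟨(e f).coeff.support, fun w => (e f).coeff w, ?_, ?_⟩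
  · by_contra! h
    apply he
    ext w
    by_cases hw : w ∈ (e f).coeff.support
    · exact h w hw
    · simpa using hw
  · intro R _ _ v
    have h1 : FreeAlgebra.lift k v =
        (MonoidAlgebra.lift k R (FreeMonoid X) (FreeMonoid.lift v)).comp e.toAlgHom := by
      ext x
      simp [e, FreeAlgebra.equivMonoidAlgebraFreeMonoid]
    rw [h1, AlgHom.comp_apply, MonoidAlgebra.lift_apply, Finsupp.sum]
    refine Finset.sum_congr rfl fun w _ => ?_
    rw [Algebra.smul_def, FreeMonoid.lift_apply]
    rfl

/-- The standard polynomial evaluated at `v`. -/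
def stdP {R : Type*} [Ring R] {n : ℕ} (v : Fin n → R) : R :=
  ∑ σ : Equiv.Perm (Fin n), Equiv.Perm.sign σ • (List.ofFn fun i => v (σ i)).prod

lemma map_stdP {R R' : Type*} [Ring R] [Ring R'] (φ : R →+* R') {n : ℕ} (v : Fin n → R) :
    φ (stdP v) = stdP fun i => φ (v i) := by
  simp only [stdP, map_sum]
  refine Finset.sum_congr rfl fun σ _ => ?_
  rw [Units.smul_def, Units.smul_def, map_zsmul, map_list_prod, List.map_ofFn]
  rfl

lemma stdP_eq {k R : Type*} [CommRing k] [Ring R] [Algebra k R] {n : ℕ} (v : Fin n → R) :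
    stdP v = MultilinearMap.alternatization (MultilinearMap.mkPiAlgebraFin k n R) v := by
  rw [MultilinearMap.alternatization_apply]
  rfl

lemma stdP_free_ne {k : Type*} [CommRing k] [Nontrivial k] (n : ℕ) :
    stdP (fun i : Fin n => FreeAlgebra.ι k i) ≠ 0 := by
  intro h
  have h1 := congrArg (FreeAlgebra.lift k
    (fun i : Fin n => (MonoidAlgebra.of k (FreeMonoid (Fin n)) (FreeMonoid.of i)))) h
  rw [map_zero] at h1
  have h2 := map_stdP (FreeAlgebra.lift k
    (fun i : Fin n => (MonoidAlgebra.of k (FreeMonoid (Fin n)) (FreeMonoid.of i)))).toRingHom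
    (fun i : Fin n => FreeAlgebra.ι k i)
  have h3 : stdP (fun i : Fin n => (MonoidAlgebra.of k (FreeMonoid (Fin n)) (FreeMonoid.of i))) = 0 := by
    rw [← h1]
    refine Eq.trans ?_ h2.symm
    simp
  have h4 : ∀ σ : Equiv.Perm (Fin n),
      (List.ofFn fun i => (MonoidAlgebra.of k (FreeMonoid (Fin n)) (FreeMonoid.of (σ i)))).prod =
      MonoidAlgebra.of k (FreeMonoid (Fin n)) (FreeMonoid.ofList (List.ofFn σ)) := by
    intro σ
    have : FreeMonoid.ofList (List.ofFn σ) = (List.ofFn fun i => FreeMonoid.of (σ i)).prod := by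
      rw [show (fun i => FreeMonoid.of (σ i)) = FreeMonoid.of ∘ σ from rfl, ← List.map_ofFn]
      generalize List.ofFn σ = l
      induction l with
      | nil => rfl
      | cons a l ih => rw [List.map_cons, List.prod_cons, ← ih]; rfl
    rw [this, map_list_prod, List.map_ofFn]
    rfl
  simp only [stdP, h4] at h3
  have h5 := congrArg (fun z => z.coeff (FreeMonoid.ofList (List.ofFn (1 : Equiv.Perm (Fin n))))) h3
  have h6 : ∀ σ : Equiv.Perm (Fin n), (Equiv.Perm.sign σ • MonoidAlgebra.of k (FreeMonoid (Fin n))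
      (FreeMonoid.ofList (List.ofFn σ))).coeff
        (FreeMonoid.ofList (List.ofFn (1 : Equiv.Perm (Fin n)))) = if σ = 1 then 1 else 0 := by
    intro σ
    split_ifs with hσ
    · subst hσ
      simp [MonoidAlgebra.of_apply]
    · have hne : FreeMonoid.ofList (List.ofFn σ) ≠
          FreeMonoid.ofList (List.ofFn (1 : Equiv.Perm (Fin n))) := by
        intro he
        apply hσ
        have := List.ofFn_injective (FreeMonoid.ofList.injective he)
        exact Equiv.ext fun i => congrFun this i
      rw [Units.smul_def, MonoidAlgebra.coeff_smul, Finsupp.smul_apply, MonoidAlgebra.of_apply,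
        MonoidAlgebra.coeff_single, Finsupp.single_eq_of_ne hne.symm, smul_zero]
  simp only [MonoidAlgebra.coeff_sum, Finsupp.finsetSum_apply, h6] at h5
  simp at h5

lemma stdP_finite {k R : Type*} [Field k] [Ring R] [Algebra k R] [Module.Finite k R] {n : ℕ}
    (hn : Module.finrank k R < n) (v : Fin n → R) : stdP v = 0 := by
  rw [stdP_eq (k := k)]
  apply AlternatingMap.map_linearDependent
  intro h
  have := h.fintype_card_le_finrank
  simp at this
  omega

lemma stdP_span {k R : Type*} [Field k] [Ring R] [Algebra k R] {n : ℕ} (E : Set R)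
    (h : ∀ v : Fin n → R, (∀ i, v i ∈ E) → stdP v = 0) (v : Fin n → R)
    (hv : ∀ i, v i ∈ Submodule.span k E) : stdP v = 0 := by
  have key : ∀ J : Finset (Fin n), ∀ v : Fin n → R, (∀ i ∈ J, v i ∈ Submodule.span k E) →
      (∀ i, i ∉ J → v i ∈ E) → stdP v = 0 := by
    intro J
    induction J using Finset.induction_on with
    | empty => intro v _ h2; exact h v fun i => h2 i (by simp)
    | insert j J hj ih =>
      intro v h1 h2
      have : ∀ z ∈ Submodule.span k E, stdP (Function.update v j z) = 0 := by
        intro z hz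
        induction hz using Submodule.span_induction with
        | mem z hz =>
          apply ih
          · intro i hi
            rw [Function.update_of_ne (by rintro rfl; exact hj hi)]
            exact h1 i (Finset.mem_insert_of_mem hi)
          · intro i hi
            by_cases hij : i = j
            · subst hij; simpa using hz
            · rw [Function.update_of_ne hij]
              exact h2 i (by simp [hij, hi])
        | zero => rw [stdP_eq (k := k)]; exact AlternatingMap.map_update_zero _ _ _
        | add a b _ _ ha hb =>
          rw [stdP_eq (k := k)] at *
          rw [AlternatingMap.map_update_add, ha, hb, add_zero]
        | smul c a _ ha =>
          rw [stdP_eq (k := k)] at *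
          rw [AlternatingMap.map_update_smul, ha, smul_zero]
      have := this (v j) (h1 j (Finset.mem_insert_self _ _))
      rwa [Function.update_eq_self] at this
  exact key Finset.univ v (fun i _ => hv i) (by simp)

theorem weaklyLocallyFinite_iff_locallyPI (D : Type*) [DivisionRing D] :
    IsWeaklyLocallyFinite D ↔ IsLocallyPI (Subring.center D) D := by
  classical
  constructor
  · intro hD S
    set E := Subfield.closure (S : Set D) with hE
    have hfin : Module.Finite (Subring.center E) E := hD S
    let n := Module.finrank (Subring.center E) E + 1
    refine ⟨n, Nat.succ_pos _, stdP (fun i => FreeAlgebra.ι _ i), stdP_free_ne n, ?_⟩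
    intro v
    have h0 := map_stdP (FreeAlgebra.lift (Subring.center D) v).toRingHom
      (fun i : Fin n => FreeAlgebra.ι _ i)
    refine h0.trans ?_
    have h1 := map_stdP (Algebra.adjoin (Subring.center D) (S : Set D)).val.toRingHom v
    have h2 : stdP v = 0 := by
      apply Subtype.ext
      refine h1.trans ?_
      apply stdP_span (k := Subring.center D) (E : Set D)
      · intro w hw
        have h3 := map_stdP E.subtype (fun i => (⟨w i, hw i⟩ : E))
        rw [stdP_finite (k := Subring.center E) (Nat.lt_succ_self _), map_zero] at h3
        exact h3.symm
      · intro i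
        have h3 : Algebra.adjoin (Subring.center D) (S : Set D) ≤
            Algebra.adjoin (Subring.center D) (E : Set D) :=
          Algebra.adjoin_mono Subfield.subset_closure
        have h4 := h3 (v i).2
        rw [← Subalgebra.mem_toSubmodule, Algebra.adjoin_eq_span] at h4
        have h5 := Submonoid.closure_eq E.toSubring.toSubmonoid
        have h6 : ((Submonoid.closure (E : Set D) : Submonoid D) : Set D) = E := by
          exact congrArg SetLike.coe h5
        rwa [h6] at h4
    rw [← h2]
    congr 1
    ext i
    simp
  · intro hD S
    obtain ⟨m, hm, f, hf, h⟩ := hD S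
    obtain ⟨W, c, hc, hW⟩ := freeAlgebra_expand f hf
    set A0 := Algebra.adjoin (Subring.center D) (S : Set D) with hA0
    set Q := Subfield.closure ((A0 : Set D)) with hQ
    let A : Subring Q := A0.toSubring.comap Q.subtype
    have hAQ : ∀ x ∈ A0, x ∈ Q := fun x hx => Subfield.subset_closure hx
    have hA : Subfield.closure (A : Set Q) = ⊤ := by
      rw [eq_top_iff]
      have h1 : Q ≤ (Subfield.closure (A : Set Q)).map Q.subtype := by
        refine Subfield.closure_le.2 ?_
        intro x hx
        exact ⟨⟨x, hAQ x hx⟩, Subfield.subset_closure hx, rfl⟩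
      intro x _
      obtain ⟨y, hy, hyx⟩ := h1 x.2
      have : y = x := Subtype.ext hyx
      rwa [← this]
    have hFA : ∀ z : Subring.center D, (z : D) ∈ Q := fun z => hAQ _ (A0.algebraMap_mem z)
    have hFZ : ∀ z : Subring.center D, (⟨z, hFA z⟩ : Q) ∈ Subring.center Q := by
      intro z
      rw [Subring.mem_center_iff]
      intro g
      exact Subtype.ext (Subring.mem_center_iff.1 z.2 g)
    have hfin : Module.Finite (Subring.center Q) Q := by
      apply kap_theorem A hA W (fun w => ⟨⟨c w, hFA _⟩, hFZ _⟩)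
      · obtain ⟨w, hw, hne⟩ := hc
        refine ⟨w, hw, fun h0 => hne ?_⟩
        have := congrArg (fun z : Subring.center Q => ((z : Q) : D)) h0
        exact Subtype.ext this
      · intro x
        have h1 := h (fun i => ⟨((x i : Q) : D), (x i).2⟩)
        rw [hW] at h1
        have h2 := congrArg A0.val h1
        apply Subtype.ext
        rw [map_zero, map_sum] at h2
        refine Eq.trans ?_ h2
        rw [AddSubmonoidClass.coe_finsetSum]
        refine Finset.sum_congr rfl fun w _ => ?_
        rw [map_mul, map_list_prod, List.map_map]
        change (c w : D) * Q.subtype _ = _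
        rw [map_list_prod, List.map_map]
        rfl
    set E := Subfield.closure (S : Set D) with hE
    have hEQ : E ≤ Q := Subfield.closure_mono Algebra.subset_adjoin
    let n := Module.finrank (Subring.center Q) Q + 1
    have hstd : ∀ v : Fin n → E, stdP v = 0 := by
      intro v
      have h1 := map_stdP E.subtype v
      have h2 := map_stdP Q.subtype (fun i => (⟨v i, hEQ (v i).2⟩ : Q))
      rw [stdP_finite (k := Subring.center Q) (Nat.lt_succ_self _), map_zero] at h2
      exact Subtype.ext (h1.trans h2.symm)
    obtain ⟨W', c', hc', hW'⟩ := freeAlgebra_expand _ (stdP_free_ne (k := Subring.center E) n)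
    change Module.Finite (Subring.center E) E
    apply kap_theorem (⊤ : Subring E) ?_ W' c' hc'
    · intro x
      have h1 := hW' (fun i => (x i : E))
      refine h1.symm.trans ?_
      have h0 := map_stdP (FreeAlgebra.lift (Subring.center E) (fun i => (x i : E))).toRingHom
        (fun i : Fin n => FreeAlgebra.ι _ i)
      refine h0.trans ?_
      exact hstd _
    · rw [Subring.coe_top, Subfield.closure_univ]
end

section
/- A division ring D is locally finite if and only if D is both weakly locally finite and algebraic over its center. (In particular, the Kurosh Problem has an affirmative answer for weakly locally finite division rings.) -/
/-- A division ring is *algebraic over its center* if every element is a root of a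
nonzero polynomial all of whose coefficients lie in the center. -/
def IsAlgebraicOverCenter (D : Type*) [DivisionRing D] : Prop :=
  ∀ x : D, ∃ p : Polynomial D, p ≠ 0 ∧ (∀ i, p.coeff i ∈ Subring.center D) ∧ p.eval x = 0

/-- A division ring `D` with center `F` is *locally finite* if for every finite subset
`S` of `D`, the division subring generated by `S ∪ F` is a finite-dimensional vector
space over `F` (i.e. it is contained in the `F`-span of finitely many elements). -/
def IsLocallyFinite (D : Type*) [DivisionRing D] : Prop :=
  ∀ S : Finset D, ∃ T : Finset D,
    (Subfield.closure ((S : Set D) ∪ (Subring.center D : Set D)) : Set D) ⊆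
      (Submodule.span (Subring.center D) (T : Set D) : Set D)

open Pointwise in
theorem wlf_adjoin_fg {F D : Type*} [Field F] [DivisionRing D] [Algebra F D] {s : Set D}
    (hs : s.Finite) (hcomm : ∀ a ∈ s, ∀ b ∈ s, a * b = b * a)
    (hint : ∀ a ∈ s, IsIntegral F a) :
    (Subalgebra.toSubmodule (Algebra.adjoin F s)).FG := by
  letI : CommRing (Algebra.adjoin F s) := Algebra.adjoinCommRingOfComm F hcomm
  have h1 := Algebra.adjoin_adjoin_coe_preimage (R := F) (s := s)
  have h2 := fg_adjoin_of_finite (R := F) (A := Algebra.adjoin F s)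
    (s := ((↑) : Algebra.adjoin F s → D) ⁻¹' s)
    (hs.preimage Subtype.val_injective.injOn) (by
      rintro ⟨x, hx⟩ hxs
      obtain ⟨p, hp, hpx⟩ := hint x hxs
      refine ⟨p, hp, ?_⟩
      have h3 : Polynomial.aeval x p = 0 := hpx
      change Polynomial.aeval (⟨x, hx⟩ : Algebra.adjoin F s) p = 0
      apply Subtype.ext
      have := Polynomial.aeval_algHom_apply (Algebra.adjoin F s).val ⟨x, hx⟩ p
      exact this.symm.trans h3)
  have h4 : (⊤ : Submodule F (Algebra.adjoin F s)).FG := by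
    have : Subalgebra.toSubmodule (Algebra.adjoin F (((↑) : Algebra.adjoin F s → D) ⁻¹' s)) = ⊤ := by
      rw [h1]; rfl
    rw [← this]; exact h2
  have h5 := h4.map (Algebra.adjoin F s).val.toLinearMap
  convert h5
  ext x
  simp

theorem wlf_indep {D : Type*} [DivisionRing D] (K : Subfield D) {ι : Type*} (u : ι → D)
    (hu : ∀ i, ∀ k ∈ K, k * u i = u i * k)
    (h : LinearIndependent (Subring.center K) u) : LinearIndependent K u := by
  classical
  rw [linearIndependent_iff'] at h ⊢
  intro s
  induction s using Finset.induction_on with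
  | empty => simp
  | insert a s ha ih =>
    intro g hg
    by_cases hga : g a = 0
    · rw [Finset.sum_insert ha, hga, zero_smul, zero_add] at hg
      intro i hi
      rcases Finset.mem_insert.1 hi with rfl | hi
      · exact hga
      · exact ih g hg i hi
    · exfalso
      set g' : ι → K := fun i => (g a)⁻¹ * g i with hg'
      have hga' : g' a = 1 := inv_mul_cancel₀ hga
      have hsum : ∑ i ∈ insert a s, g' i • u i = 0 := by
        have := congrArg (fun x => (g a)⁻¹ • x) hg
        simpa [Finset.smul_sum, hg', mul_smul] using this
      have hc : ∀ k : K, ∀ i ∈ s, k * g' i - g' i * k = 0 := by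
        intro k
        apply ih
        have e1 : ∑ i ∈ insert a s, (k * g' i - g' i * k) • u i = 0 := by
          have e2 : ∀ i, (k * g' i - g' i * k) • u i =
              (k : D) * (g' i • u i) - (g' i • u i) * (k : D) := by
            intro i
            simp only [Subfield.smul_def, smul_eq_mul]
            push_cast
            have := hu i k k.2
            rw [sub_mul, mul_assoc, mul_assoc, mul_assoc, this]
          simp only [e2]
          rw [Finset.sum_sub_distrib, ← Finset.mul_sum, ← Finset.sum_mul, hsum]
          simp
        rw [Finset.sum_insert ha, hga'] at e1
        simpa using e1
      have hcen : ∀ i ∈ insert a s, g' i ∈ Subring.center K := by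
        intro i hi
        rw [Subring.mem_center_iff]
        intro k
        rcases Finset.mem_insert.1 hi with rfl | hi
        · rw [hga']; simp
        · exact sub_eq_zero.1 (hc k i hi)
      let z : ι → Subring.center K := fun i =>
        if hi : i ∈ insert a s then ⟨g' i, hcen i hi⟩ else 0
      have hz : ∀ i ∈ insert a s, z i • u i = g' i • u i := by
        intro i hi
        simp only [z, dif_pos hi]
        rfl
      have := h (insert a s) z (by rw [Finset.sum_congr rfl hz]; exact hsum) a
        (Finset.mem_insert_self a s)
      simp only [z, dif_pos (Finset.mem_insert_self a s)] at this
      have h7 := congrArg Subtype.val this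
      simp only [hga'] at h7
      exact one_ne_zero h7

/-- The centralizer of `K` as a vector space over the center of `K`. -/
def wlfCentralizer {D : Type*} [DivisionRing D] (K : Subfield D) :
    Submodule (Subring.center K) D where
  carrier := {d | ∀ k ∈ K, k * d = d * k}
  add_mem' := by
    intro a b ha hb k hk
    rw [mul_add, add_mul, ha k hk, hb k hk]
  zero_mem' := by intro k _; simp
  smul_mem' := by
    intro c x hx k hk
    have h1 : c • x = ((c : K) : D) * x := rfl
    have h2 : k * ((c : K) : D) = ((c : K) : D) * k :=
      congrArg Subtype.val ((Subring.mem_center_iff.1 c.2) ⟨k, hk⟩)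
    rw [h1, ← mul_assoc, h2, mul_assoc, hx k hk, mul_assoc]

theorem wlf_disjoint {D : Type*} [DivisionRing D] (K : Subfield D) {ι : Type*} (b : ι → K)
    (h : LinearIndependent (Subring.center K) b) :
    LinearIndependent (Subring.center D) (fun i => (b i : D)) := by
  classical
  rw [linearIndependent_iff'] at h ⊢
  intro s g hg
  let B := Module.Basis.ofVectorSpace (Subring.center K) (wlfCentralizer K)
  have hind : LinearIndependent K (fun j => (B j : D)) := by
    apply wlf_indep K
    · intro j; exact (B j).2
    · exact B.linearIndependent.map' (wlfCentralizer K).subtype (Submodule.ker_subtype _)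
  have hgm : ∀ i, (g i : D) ∈ wlfCentralizer K := by
    intro i k _
    exact Subring.mem_center_iff.1 (g i).2 k
  let z : ι → wlfCentralizer K := fun i => ⟨g i, hgm i⟩
  let J : Finset _ := s.biUnion fun i => (B.repr (z i)).support
  have hz : ∀ i ∈ s, (g i : D) = ∑ j ∈ J, ((B.repr (z i) j : K) : D) * (B j : D) := by
    intro i hi
    have h1 := B.linearCombination_repr (z i)
    rw [Finsupp.linearCombination_apply, Finsupp.sum_of_support_subset (s := J) _
      (Finset.subset_biUnion_of_mem (fun i => (B.repr (z i)).support) hi) _ (by simp)] at h1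
    have h2 := congrArg (wlfCentralizer K).subtype h1
    rw [map_sum] at h2
    exact h2.symm
  have hrel : ∑ j ∈ J, (∑ i ∈ s, (B.repr (z i) j : K) * b i) • (B j : D) = 0 := by
    rw [← hg]
    simp only [Finset.sum_smul]
    rw [Finset.sum_comm]
    refine Finset.sum_congr rfl fun i hi => ?_
    have h3 : g i • (b i : D) = (g i : D) * b i := rfl
    rw [h3, hz i hi, Finset.sum_mul]
    refine Finset.sum_congr rfl fun j _ => ?_
    have h4 := (B j).2 (b i) (b i).2
    rw [Subfield.smul_def, smul_eq_mul]
    push_cast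
    rw [mul_assoc, mul_assoc, h4]
  have h5 := (linearIndependent_iff'.1 hind) J _ hrel
  intro i hi
  have h6 : ∀ j ∈ J, B.repr (z i) j = 0 := fun j hj => h s (fun i => B.repr (z i) j) (h5 j hj) i hi
  apply Subtype.ext
  rw [hz i hi]
  refine Finset.sum_eq_zero fun j hj => ?_
  rw [h6 j hj]; simp

theorem wlf_of_lf {D : Type*} [DivisionRing D] (h : IsLocallyFinite D) :
    IsWeaklyLocallyFinite D := by
  intro S
  obtain ⟨T, hT⟩ := h S
  unfold IsCentrallyFinite
  set K := Subfield.closure (S : Set D)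
  let b := Module.Basis.ofVectorSpace (Subring.center K) K
  have hb := wlf_disjoint K b b.linearIndependent
  have hmem : ∀ i, (b i : D) ∈ Submodule.span (Subring.center D) (T : Set D) := fun i =>
    hT (Subfield.closure_mono Set.subset_union_left (b i).2)
  have hfin : Module.Finite (Subring.center D) (Submodule.span (Subring.center D) (T : Set D)) :=
    Module.Finite.span_of_finite _ T.finite_toSet
  have hb' : LinearIndependent (Subring.center D)
      (fun i => (⟨b i, hmem i⟩ : Submodule.span (Subring.center D) (T : Set D))) :=
    LinearIndependent.of_comp (Submodule.span (Subring.center D) (T : Set D)).subtype hb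
  have := hb'.finite
  exact Module.Finite.of_basis b

theorem alg_of_lf {D : Type*} [DivisionRing D] (h : IsLocallyFinite D) :
    IsAlgebraicOverCenter D := by
  intro x
  obtain ⟨T, hT⟩ := h {x}
  set L := Subfield.closure (((({x} : Finset D) : Set D)) ∪ (Subring.center D : Set D)) with hL
  let A : Subalgebra (Subring.center D) D :=
    { L.toSubring with
      algebraMap_mem' := fun r => Subfield.subset_closure (Or.inr r.2) }
  have hfin : Module.Finite (Subring.center D) (Submodule.span (Subring.center D) (T : Set D)) :=
    Module.Finite.span_of_finite _ T.finite_toSet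
  have hle : Subalgebra.toSubmodule A ≤ Submodule.span (Subring.center D) (T : Set D) := hT
  have hfg : (Subalgebra.toSubmodule A).FG :=
    Submodule.FG.of_le (Submodule.fg_span T.finite_toSet) hle
  have hx : x ∈ A := Subfield.subset_closure (Or.inl (by simp))
  obtain ⟨p, hp, hpx⟩ := IsIntegral.of_mem_of_fg A hfg x hx
  refine ⟨p.map (algebraMap (Subring.center D) D), (hp.map _).ne_zero, ?_, ?_⟩
  · intro i
    rw [Polynomial.coeff_map]
    exact (p.coeff i).2
  · rw [Polynomial.eval_map]; exact hpx

theorem isIntegral_of_alg {D : Type*} [DivisionRing D] (h : IsAlgebraicOverCenter D) (x : D) :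
    IsIntegral (Subring.center D) x := by
  rw [← isAlgebraic_iff_isIntegral]
  obtain ⟨p, hp, hc, hpx⟩ := h x
  have : p ∈ Polynomial.lifts (algebraMap (Subring.center D) D) := by
    rw [Polynomial.lifts_iff_coeff_lifts]
    intro n
    exact ⟨⟨_, hc n⟩, rfl⟩
  obtain ⟨q, rfl⟩ := (Polynomial.mem_lifts p).1 this
  refine ⟨q, ?_, ?_⟩
  · rintro rfl; simp at hp
  · rw [Polynomial.eval_map] at hpx; exact hpx

open Pointwise in
theorem lf_of_wlf_alg {D : Type*} [DivisionRing D] (h : IsWeaklyLocallyFinite D)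
    (ha : IsAlgebraicOverCenter D) : IsLocallyFinite D := by
  classical
  intro S
  have hK := h S
  unfold IsCentrallyFinite at hK
  set K := Subfield.closure (S : Set D) with hKdef
  obtain ⟨T, hT⟩ := hK.fg_top
  have hex : ∀ x : K, ∃ f : K → Subring.center K, ∑ t ∈ T, f t • t = x := by
    intro x
    have hx : x ∈ Submodule.span (Subring.center K) (T : Set K) := by rw [hT]; trivial
    obtain ⟨f, -, hf⟩ := Submodule.mem_span_finset.1 hx
    exact ⟨f, hf⟩
  choose f hf using hex
  let P : Set K := ((T : Set K) * (T : Set K)) ∪ {1} ∪ (Subtype.val ⁻¹' (S : Set D))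
  have hP : P.Finite := ((T.finite_toSet.mul T.finite_toSet).union (Set.finite_singleton 1)).union
    (S.finite_toSet.preimage Subtype.val_injective.injOn)
  let C : Set D := (fun p : K × K => ((f p.1 p.2 : K) : D)) '' (P ×ˢ (T : Set K))
  have hC : C.Finite := (hP.prod T.finite_toSet).image _
  have hCK : ∀ c ∈ C, c ∈ K := by
    rintro _ ⟨p, -, rfl⟩; exact (f p.1 p.2 : K).2
  have hCc : ∀ c ∈ C, ∀ k ∈ K, k * c = c * k := by
    rintro _ ⟨p, -, rfl⟩ k hk
    exact congrArg Subtype.val ((Subring.mem_center_iff.1 (f p.1 p.2).2) ⟨k, hk⟩)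
  let A := Algebra.adjoin (Subring.center D) C
  have hAfg : (Subalgebra.toSubmodule A).FG := wlf_adjoin_fg hC
    (fun a ha b hb => hCc b hb a (hCK a ha)) (fun a _ => isIntegral_of_alg ha a)
  have hAc : ∀ a ∈ A, ∀ k ∈ K, k * a = a * k := by
    have : A ≤ Subalgebra.centralizer (Subring.center D) (K : Set D) := by
      apply Algebra.adjoin_le
      intro c hc
      rw [SetLike.mem_coe, Subalgebra.mem_centralizer_iff]
      exact hCc c hc
    intro a ha
    exact (Subalgebra.mem_centralizer_iff _).1 (this ha)
  let T' : Set D := Subtype.val '' (T : Set K)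
  let V : Submodule (Subring.center D) D := Submodule.span _ T'
  let M : Submodule (Subring.center D) D := Subalgebra.toSubmodule A
  let N := M * V
  have hNfg : N.FG := hAfg.mul (Submodule.fg_span (T.finite_toSet.image _))
  have hPN : ∀ x ∈ P, (x : D) ∈ N := by
    intro x hx
    have h1 : (x : D) = ∑ t ∈ T, ((f x t : K) : D) * (t : D) := by
      conv_lhs => rw [← hf x]
      push_cast
      rfl
    rw [h1]
    refine Submodule.sum_mem _ fun t ht => Submodule.mul_mem_mul ?_ ?_
    · exact Algebra.subset_adjoin ⟨(x, t), ⟨hx, ht⟩, rfl⟩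
    · exact Submodule.subset_span ⟨t, ht, rfl⟩
  have hVV : V * V ≤ N := by
    rw [Submodule.span_mul_span, Submodule.span_le]
    rintro _ ⟨_, ⟨a, ha, rfl⟩, _, ⟨b, hb, rfl⟩, rfl⟩
    exact hPN (a * b) (Or.inl (Or.inl (Set.mul_mem_mul ha hb)))
  have hMM : M * M ≤ M := by
    rw [Submodule.mul_le]
    intro a ha b hb
    exact A.mul_mem ha hb
  have hVM : V * M ≤ M * V := by
    rw [Submodule.mul_le]
    intro v hv a ha
    have : v * a = a * v := by
      induction hv using Submodule.span_induction with
      | mem x hx =>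
        obtain ⟨t, -, rfl⟩ := hx
        exact hAc a ha t t.2
      | zero => simp
      | add x y _ _ hx hy => rw [add_mul, mul_add, hx, hy]
      | smul r x _ hx => rw [smul_mul_assoc, mul_smul_comm, hx]
    rw [this]
    exact Submodule.mul_mem_mul ha hv
  have hNN : N * N ≤ N := by
    calc N * N = M * (V * M) * V := by simp only [N, mul_assoc]
      _ ≤ M * (M * V) * V := by gcongr
      _ = M * M * (V * V) := by simp only [mul_assoc]
      _ ≤ M * N := by gcongr
      _ = M * M * V := by simp only [N, mul_assoc]
      _ ≤ M * V := by gcongr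
  let R : Subalgebra (Subring.center D) D := N.toSubalgebra
    (by simpa using hPN 1 (Or.inl (Or.inr rfl)))
    (fun x y hx hy => hNN (Submodule.mul_mem_mul hx hy))
  let L : Subfield D := { R.toSubring with
    inv_mem' := fun x hx => (isIntegral_of_alg ha x).inv_mem (A := R) hx }
  have hL : Subfield.closure ((S : Set D) ∪ (Subring.center D : Set D)) ≤ L := by
    rw [Subfield.closure_le]
    rintro x (hx | hx)
    · exact hPN ⟨x, Subfield.subset_closure hx⟩ (Or.inr hx)
    · exact R.algebraMap_mem ⟨x, hx⟩
  obtain ⟨G, hG⟩ := hNfg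
  refine ⟨G, ?_⟩
  rw [hG]
  exact hL

/-- A division ring is locally finite if and only if it is weakly locally finite and
algebraic over its center (the Kurosh Problem holds for weakly locally finite division
rings). -/
theorem locallyFinite_iff_weaklyLocallyFinite_and_algebraic (D : Type*)
    [DivisionRing D] :
    IsLocallyFinite D ↔ IsWeaklyLocallyFinite D ∧ IsAlgebraicOverCenter D := by
  exact ⟨fun h => ⟨wlf_of_lf h, alg_of_lf h⟩, fun h => lf_of_wlf_alg h.1 h.2⟩
end

section
/- Let D be a non-commutative division ring with center F which is weakly locally finite and algebraic over F, let n ≥ 1, and let N be a subgroup of GL_n(D) containing the group F*·I of nonzero central scalar matrices. Then N is not finitely generated. -/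
theorem aux_isJacobsonRing_int : IsJacobsonRing ℤ := by
  rw [isJacobsonRing_iff_prime_eq]
  intro P hP
  by_cases h : P = ⊥
  · subst h
    rw [eq_bot_iff]
    intro x hx
    rw [Ideal.mem_jacobson_bot] at hx
    have h1 := hx x
    rw [Int.isUnit_iff] at h1
    rw [Ideal.mem_bot]
    rcases h1 with h1 | h1 <;> nlinarith
  · have := hP.isMaximal h
    exact Ideal.jacobson_eq_self_of_isMaximal

theorem aux_finite_field (K : Type*) [Field K] (h : Algebra.FiniteType ℤ K) : Finite K := by
  have := aux_isJacobsonRing_int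
  have hf : Module.Finite ℤ K := finite_of_finite_type_of_isJacobsonRing ℤ K
  obtain ⟨p, hp⟩ := CharP.exists K
  by_cases h0 : p = 0
  · subst h0
    have : CharZero K := CharP.charP_to_charZero K
    have hinj : Function.Injective (algebraMap ℤ K) := by
      rw [algebraMap_int_eq]; exact Int.cast_injective
    have := isField_of_isIntegral_of_isField hinj (Field.toIsField K)
    exact absurd this Int.not_isField
  · have : AddGroup.FG K := Module.Finite.iff_addGroup_fg.mp hf
    refine AddCommGroup.finite_of_fg_isAddTorsion K ?_
    intro x
    rw [isOfFinAddOrder_iff_nsmul_eq_zero]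
    exact ⟨p, Nat.pos_of_ne_zero h0, by simp⟩

theorem aux_finite_divisionRing (E : Type*) [DivisionRing E]
    (hfin : Module.Finite (Subring.center E) E) (hfg : (⊤ : Subalgebra ℤ E).FG) : Finite E := by
  obtain ⟨B₀, hB₀, hE⟩ := exists_subalgebra_of_fg ℤ (Subring.center E) E hfg hfin.1
  have hK : Algebra.FiniteType ℤ (Subring.center E) := by
    constructor
    refine Algebra.fg_trans' (B₀.fg_top.2 hB₀) <| Subalgebra.fg_of_submodule_fg ?_
    have : IsNoetherianRing B₀ := isNoetherianRing_of_fg hB₀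
    have : Module.Finite B₀ E := ⟨hE⟩
    exact Module.Finite.fg_top (R := B₀) (M := Subring.center E)
      (self := Module.Finite.of_injective
        (IsScalarTower.toAlgHom B₀ (Subring.center E) E).toLinearMap
        (Subtype.val_injective))
  have := aux_finite_field _ hK
  exact Module.finite_of_finite (Subring.center E)

theorem aux_inv_mem (D : Type*) [DivisionRing D] (halg : IsAlgebraicOverCenter D)
    (A : Subring D) (hA : ∀ α ∈ Subring.center D, α ∈ A) (x : D) (hx : x ∈ A) : x⁻¹ ∈ A := by
  by_cases hx0 : x = 0
  · subst hx0; simp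
  let A' : Subalgebra (Subring.center D) D :=
    { A.toSubsemiring with algebraMap_mem' := fun r => hA _ r.2 }
  obtain ⟨p, hp0, hpc, hpx⟩ := halg x
  have hint : IsIntegral (Subring.center D) (⟨x, hx⟩ : A') := by
    rw [← isAlgebraic_iff_isIntegral]
    have hT : (↑p.coeffs : Set D) ⊆ Subring.center D := by
      intro c hc
      obtain ⟨i, _, rfl⟩ := Polynomial.mem_coeffs_iff.mp hc
      exact hpc i
    refine ⟨p.toSubring _ hT, ?_, ?_⟩
    · intro h
      apply hp0
      ext i
      rw [← Polynomial.coeff_toSubring p _ hT, h]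
      simp
    · apply Subtype.val_injective
      have : ((Polynomial.aeval (⟨x, hx⟩ : A') (p.toSubring _ hT) : A') : D)
        = Polynomial.aeval x (p.toSubring _ hT) :=
          (Polynomial.aeval_algHom_apply A'.val (⟨x, hx⟩ : A') _).symm
      rw [this, Polynomial.aeval_def, Polynomial.eval₂_eq_eval_map]
      have h2 : (p.toSubring _ hT).map (algebraMap (Subring.center D) D) = p := by
        ext i
        rw [Polynomial.coeff_map]
        exact Polynomial.coeff_toSubring ..
      rw [h2, hpx]; rfl
  have hu := hint.isUnit (fun h => hx0 (congrArg Subtype.val h))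
  obtain ⟨y, hy⟩ := hu.exists_right_inv
  have hy' : x * (y : D) = 1 := congrArg Subtype.val hy
  rw [inv_eq_of_mul_eq_one_right hy']
  exact y.2

/-- Let `D` be a non-commutative, weakly locally finite division ring, algebraic over
its center `F`, `n ≥ 1`, and let `N` be a subgroup of `GL_n(D)` containing all central
scalar matrices `F*·I`. Then `N` is not finitely generated. -/
theorem subgroup_containing_central_scalars_not_fg (D : Type*) [DivisionRing D]
    (hnc : ∃ a b : D, a * b ≠ b * a) (hwlf : IsWeaklyLocallyFinite D)
    (halg : IsAlgebraicOverCenter D) (n : ℕ) (hn : 1 ≤ n)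
    (N : Subgroup (Matrix (Fin n) (Fin n) D)ˣ)
    (hcent : ∀ u : (Matrix (Fin n) (Fin n) D)ˣ,
      (∃ α ∈ Subring.center D,
        u.val = Matrix.scalar (Fin n) α) → u ∈ N) :
    ¬ N.FG := by
  classical
  rintro ⟨G, hG⟩
  obtain ⟨a, b, hab⟩ := hnc
  let S : Finset D := {a, b} ∪
    (G.biUnion fun g => Finset.univ.image fun ij : Fin n × Fin n => g.val ij.1 ij.2) ∪
    (G.biUnion fun g => Finset.univ.image fun ij : Fin n × Fin n => g⁻¹.val ij.1 ij.2)
  let A : Subring D := Subring.closure (S : Set D)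
  have haS : a ∈ S := by simp [S]
  have hbS : b ∈ S := by simp [S]
  have hgS : ∀ g ∈ G, ∀ i j, g.val i j ∈ S := by
    intro g hg i j
    refine Finset.mem_union_left _ (Finset.mem_union_right _ ?_)
    exact Finset.mem_biUnion.2 ⟨g, hg, Finset.mem_image.2 ⟨(i, j), Finset.mem_univ _, rfl⟩⟩
  have hgS' : ∀ g ∈ G, ∀ i j, g⁻¹.val i j ∈ S := by
    intro g hg i j
    refine Finset.mem_union_right _ ?_
    exact Finset.mem_biUnion.2 ⟨g, hg, Finset.mem_image.2 ⟨(i, j), Finset.mem_univ _, rfl⟩⟩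
  -- all entries of elements of `N` lie in `A`
  have hNA : ∀ g ∈ N, (∀ i j, g.val i j ∈ A) ∧ (∀ i j, g⁻¹.val i j ∈ A) := by
    intro g hg
    rw [← hG] at hg
    induction hg using Subgroup.closure_induction with
    | mem x hx =>
      exact ⟨fun i j => Subring.subset_closure (hgS x hx i j),
        fun i j => Subring.subset_closure (hgS' x hx i j)⟩
    | one =>
      have : ∀ i j, (1 : Matrix (Fin n) (Fin n) D) i j ∈ A := by
        intro i j
        rw [Matrix.one_apply]
        split_ifs
        · exact A.one_mem
        · exact A.zero_mem
      exact ⟨this, by simpa using this⟩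
    | mul x y _ _ hx hy =>
      refine ⟨fun i j => ?_, fun i j => ?_⟩
      · rw [Units.val_mul, Matrix.mul_apply]
        exact A.sum_mem fun k _ => A.mul_mem (hx.1 _ _) (hy.1 _ _)
      · rw [mul_inv_rev, Units.val_mul, Matrix.mul_apply]
        exact A.sum_mem fun k _ => A.mul_mem (hy.2 _ _) (hx.2 _ _)
    | inv x _ hx => exact ⟨hx.2, by rw [inv_inv]; exact hx.1⟩
  have hcA : ∀ α ∈ Subring.center D, α ∈ A := by
    intro α hα
    by_cases h0 : α = 0
    · rw [h0]; exact A.zero_mem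
    let u : (Matrix (Fin n) (Fin n) D)ˣ :=
      Units.map (Matrix.scalar (Fin n)).toMonoidHom (Units.mk0 α h0)
    have hu : u.val = Matrix.scalar (Fin n) α := rfl
    have h := (hNA u (hcent u ⟨α, hα, hu⟩)).1 ⟨0, hn⟩ ⟨0, hn⟩
    rw [hu] at h
    simpa using h
  let A' : Subfield D := { A with inv_mem' := fun x hx => aux_inv_mem D halg A hcA x hx }
  have hle : Subfield.closure (S : Set D) ≤ A' :=
    Subfield.closure_le.2 fun x hx => Subring.subset_closure hx
  have hsub : ∀ x : D, x ∈ S → x ∈ Subfield.closure (S : Set D) :=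
    fun x hx => Subfield.subset_closure hx
  let E := Subfield.closure (S : Set D)
  let T : Finset E := S.attach.image fun x => ⟨x.1, hsub x.1 x.2⟩
  have hfg : (⊤ : Subalgebra ℤ E).FG := by
    refine ⟨T, ?_⟩
    rw [eq_top_iff]
    have key : ∀ x ∈ A, ∃ y ∈ Algebra.adjoin ℤ (T : Set E), (y : D) = x := by
      intro x hx
      induction hx using Subring.closure_induction with
      | mem x hx =>
        refine ⟨⟨x, hsub x hx⟩, Algebra.subset_adjoin ?_, rfl⟩
        exact Finset.mem_coe.2 (Finset.mem_image.2 ⟨⟨x, hx⟩, Finset.mem_attach _ _, rfl⟩)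
      | zero => exact ⟨0, zero_mem _, rfl⟩
      | one => exact ⟨1, one_mem _, rfl⟩
      | add x y _ _ hx hy =>
        obtain ⟨x', hx', rfl⟩ := hx
        obtain ⟨y', hy', rfl⟩ := hy
        exact ⟨x' + y', add_mem hx' hy', rfl⟩
      | neg x _ hx =>
        obtain ⟨x', hx', rfl⟩ := hx
        exact ⟨-x', neg_mem hx', rfl⟩
      | mul x y _ _ hx hy =>
        obtain ⟨x', hx', rfl⟩ := hx
        obtain ⟨y', hy', rfl⟩ := hy
        exact ⟨x' * y', mul_mem hx' hy', rfl⟩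
    rintro x -
    obtain ⟨y, hy, hyx⟩ := key x (hle x.2)
    rwa [← Subtype.ext hyx]
  have hfinE : Finite E := aux_finite_divisionRing E (hwlf S) hfg
  have hcomm : ∀ x y : E, x * y = y * x := (Finite.isDomain_to_isField E).mul_comm
  exact hab (congrArg Subtype.val (hcomm ⟨a, hsub a haS⟩ ⟨b, hsub b hbS⟩))
end

section
/- Let D be a weakly locally finite division ring with center F and let K be a proper division subring of D (K ≠ D). Then every normal subgroup N of the multiplicative group D* that is radical over K is contained in F. -/
/-- Some power of each element of `N` commutes with a given element. -/
lemma aux_power_commute {D : Type*} [DivisionRing D] (K : Subfield D) (hK : K ≠ ⊤)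
    (N : Subgroup Dˣ) (hN : N.Normal)
    (hrad : ∀ x ∈ N, ∃ m : ℕ, 0 < m ∧ ((x : Dˣ) : D) ^ m ∈ K)
    (a : Dˣ) (ha : a ∈ N) (y : D) : ∃ m : ℕ, 0 < m ∧ Commute ((a : D) ^ m) y := by
  have conj : ∀ b : D, b ≠ 0 → ∃ m : ℕ, 0 < m ∧ b * (a : D) ^ m * b⁻¹ ∈ K := by
    intro b hb
    obtain ⟨m, hm, h⟩ := hrad _ (hN.conj_mem a ha (Units.mk0 b hb))
    refine ⟨m, hm, ?_⟩
    rw [← Units.val_pow_eq_pow_val, conj_pow] at h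
    simpa using h
  have conj_mul : ∀ (b : D) (m j : ℕ), b ≠ 0 → b * (a : D) ^ m * b⁻¹ ∈ K →
      b * (a : D) ^ (m * j) * b⁻¹ ∈ K := by
    intro b m j hb h
    have : b * (a : D) ^ (m * j) * b⁻¹ = (b * (a : D) ^ m * b⁻¹) ^ j := by
      have := conj_pow (i := j) (a := Units.mk0 b hb) (b := a ^ m)
      have h2 := congrArg (fun u : Dˣ => (u : D)) this
      simp only [Units.val_mul, Units.val_pow_eq_pow_val, Units.val_mk0,
        Units.val_inv_eq_inv_val] at h2
      rw [pow_mul]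
      exact h2.symm
    rw [this]
    exact pow_mem h j
  have main : ∀ b : D, b ∉ K → ∃ m : ℕ, 0 < m ∧ Commute ((a : D) ^ m) b := by
    intro b hb
    have hb0 : b ≠ 0 := fun h => hb (h ▸ K.zero_mem)
    have hb1 : 1 + b ≠ 0 := fun h => hb (by
      have : b = -1 := by rw [eq_neg_iff_add_eq_zero, add_comm]; exact h
      rw [this]; exact neg_mem K.one_mem)
    obtain ⟨m0, hm0, h0⟩ := conj 1 one_ne_zero
    obtain ⟨m1, hm1, h1⟩ := conj b hb0
    obtain ⟨m2, hm2, h2⟩ := conj (1 + b) hb1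
    have h0' := conj_mul 1 m0 (m1 * m2) one_ne_zero h0
    have h1' := conj_mul b m1 (m0 * m2) hb0 h1
    have h2' := conj_mul (1 + b) m2 (m0 * m1) hb1 h2
    rw [show m1 * (m0 * m2) = m0 * (m1 * m2) by ring] at h1'
    rw [show m2 * (m0 * m1) = m0 * (m1 * m2) by ring] at h2'
    refine ⟨m0 * (m1 * m2), by positivity, ?_⟩
    generalize (a : D) ^ (m0 * (m1 * m2)) = c at *
    simp only [one_mul, inv_one, mul_one] at h0'
    generalize hu : b * c * b⁻¹ = u at *
    generalize hv : (1 + b) * c * (1 + b)⁻¹ = v at *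
    have e1 : b * c = u * b := by rw [← hu]; simp [mul_assoc, hb0]
    have e2 : (1 + b) * c = v * (1 + b) := by rw [← hv]; simp [mul_assoc, hb1]
    have e3 : (v - u) * b = c - v := by
      have : c + u * b = v + v * b := by rw [← e1]; simpa [add_mul, mul_add] using e2
      rw [sub_mul, sub_eq_sub_iff_add_eq_add, this, add_comm]
    by_cases hvu : v - u = 0
    · rw [hvu, zero_mul] at e3
      have hcv : c = v := (sub_eq_zero.mp e3.symm)
      have : u = c := by rw [hcv]; exact (sub_eq_zero.mp hvu).symm
      rw [this] at e1
      exact e1.symm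
    · exfalso
      apply hb
      have : b = (v - u)⁻¹ * (c - v) := by rw [← e3]; simp [hvu]
      rw [this]
      exact mul_mem (inv_mem (sub_mem h2' h1')) (sub_mem h0' h2')
  by_cases hy : y ∈ K
  · obtain ⟨d, hd⟩ : ∃ d, d ∉ K := by
      by_contra hcon
      push Not at hcon
      exact hK (eq_top_iff.mpr fun x _ => hcon x)
    obtain ⟨m1, hm1, h1⟩ := main d hd
    obtain ⟨m2, hm2, h2⟩ := main (y + d) (fun h => hd (by simpa using sub_mem h hy))
    refine ⟨m1 * m2, by positivity, ?_⟩
    have h1' : Commute ((a : D) ^ (m1 * m2)) d := by rw [pow_mul]; exact h1.pow_left _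
    have h2' : Commute ((a : D) ^ (m1 * m2)) (y + d) := by
      rw [mul_comm, pow_mul]; exact h2.pow_left _
    simpa using h2'.sub_right h1'
  · exact main y hy

/-- The valuation argument. -/
lemma aux_core {F D : Type*} [Field F] [DivisionRing D] [Algebra F D] {n : ℕ}
    (ρ : D →+* Matrix (Fin n) (Fin n) F) (hρF : ∀ (s : F) (x : D), ρ (s • x) = s • ρ x)
    [Nontrivial (Matrix (Fin n) (Fin n) F)]
    (V : ValuationSubring F) (π : V) (hπ0 : π ≠ 0) (hπ : ¬ IsUnit π)
    (hk : ∀ k : ℕ, k.Prime → (k : F) ≠ 0 → ¬ (π ^ 2 ∣ (k : V)))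
    (a : D) (ha : a ≠ 0)
    (htor : ∀ x : D, x ≠ 0 → ∃ m : ℕ, 0 < m ∧ (x * a * x⁻¹ * a⁻¹) ^ m = 1) (x : D) :
    a * x = x * a := by
  classical
  have hden : ∃ d : V, d ≠ 0 ∧ ∃ X X' : Matrix (Fin n) (Fin n) V,
      ρ ((d : F) • x) = X.map (algebraMap V F) ∧
      ρ ((d : F) • (a * x * a⁻¹)) = X'.map (algebraMap V F) := by
    obtain ⟨d, hd⟩ := IsLocalization.exist_integer_multiples_of_finite (nonZeroDivisors V)
      (fun i : Bool × Fin n × Fin n => if i.1 then ρ x i.2.1 i.2.2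
        else ρ (a * x * a⁻¹) i.2.1 i.2.2)
    choose g hg using hd
    refine ⟨d, nonZeroDivisors.ne_zero d.2, fun i j => g (true, i, j),
      fun i j => g (false, i, j), ?_, ?_⟩
    · ext i j
      rw [hρF]
      have := hg (true, i, j)
      exact this.symm
    · ext i j
      rw [hρF]
      have := hg (false, i, j)
      exact this.symm
  obtain ⟨d, hd0, X, X', hX, hX'⟩ := hden
  set s : F := (π : F) ^ 2 * d with hs
  have hs0 : s ≠ 0 := by
    have h1 : (π : F) ≠ 0 := by simpa using hπ0
    have h2 : (d : F) ≠ 0 := by simpa using hd0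
    rw [hs]; positivity
  let φ : Matrix (Fin n) (Fin n) V →+* Matrix (Fin n) (Fin n) F := (algebraMap V F).mapMatrix
  have hφinj : Function.Injective φ := by
    intro A B h
    ext i j
    have := congrFun (congrFun h i) j
    simpa [φ] using this
  let U : Matrix (Fin n) (Fin n) V := 1 + π ^ 2 • X
  let U' : Matrix (Fin n) (Fin n) V := 1 + π ^ 2 • X'
  have hφs : ∀ Y : Matrix (Fin n) (Fin n) V, φ (π ^ 2 • Y) = (π : F) ^ 2 • φ Y := by
    intro Y
    ext i j
    simp [φ]
  have hU : ρ (1 + s • x) = φ U := by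
    rw [map_add, map_add, map_one, map_one, hφs, hs, mul_smul, hρF, hX]; rfl
  have hU' : ρ (1 + s • (a * x * a⁻¹)) = φ U' := by
    rw [map_add, map_add, map_one, map_one, hφs, hs, mul_smul, hρF, hX']; rfl
  have hunit : IsUnit U' := by
    rw [Matrix.isUnit_iff_isUnit_det]
    by_contra hnu
    have h1 : IsLocalRing.residue V U'.det = 0 := by
      rw [IsLocalRing.residue_eq_zero_iff]; exact hnu
    have h2 : IsLocalRing.residue V π = 0 := by
      rw [IsLocalRing.residue_eq_zero_iff]; exact hπ
    rw [RingHom.map_det] at h1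
    have h3 : (IsLocalRing.residue V).mapMatrix U' = 1 := by
      rw [map_add, map_one]
      ext i j
      simp [h2]
    rw [h3, Matrix.det_one] at h1
    exact one_ne_zero h1
  obtain ⟨W, hW⟩ := hunit.exists_right_inv
  have hne' : 1 + s • (a * x * a⁻¹) ≠ 0 := by
    intro h0
    have : IsUnit (φ U') := hunit.map φ
    rw [← hU', h0, map_zero] at this
    exact not_isUnit_zero this
  have hconj : 1 + s • (a * x * a⁻¹) = a * (1 + s • x) * a⁻¹ := by
    rw [mul_add, add_mul]; simp [ha]
  have hne : 1 + s • x ≠ 0 := by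
    intro h0
    rw [hconj, h0] at hne'
    simp at hne'
  obtain ⟨m, hm, hc⟩ := htor _ hne
  set c : D := (1 + s • x) * a * (1 + s • x)⁻¹ * a⁻¹ with hcdef
  have hcmul : c * (1 + s • (a * x * a⁻¹)) = 1 + s • x := by
    rw [hconj, hcdef]
    simp [mul_assoc, ha, hne]
  let C : Matrix (Fin n) (Fin n) V := U * W
  have hρc : ρ c = φ C := by
    have h1 : ρ c * φ U' = φ U := by rw [← hU', ← hU, ← map_mul, hcmul]
    calc ρ c = ρ c * φ (U' * W) := by rw [hW, map_one, mul_one]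
      _ = φ C := by rw [map_mul φ, ← mul_assoc, h1, ← map_mul]
  have hc1 : c = 1 := by
    by_contra hcne
    have hfin : IsOfFinOrder c := isOfFinOrder_iff_pow_eq_one.mpr ⟨m, hm, hc⟩
    have hord : orderOf c ≠ 1 := fun h => hcne (orderOf_eq_one_iff.mp h)
    obtain ⟨k, hkp, hkd⟩ := Nat.exists_prime_and_dvd hord
    obtain ⟨j, hj⟩ := hkd
    have hopos := hfin.orderOf_pos
    have he1 : (c ^ j) ^ k = 1 := by
      rw [← pow_mul, mul_comm, ← hj, pow_orderOf_eq_one]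
    have hene : c ^ j ≠ 1 := by
      intro h1
      have h2 := orderOf_dvd_of_pow_eq_one h1
      have hjpos : 0 < j := by
        rcases Nat.eq_zero_or_pos j with h | h
        · subst h; rw [mul_zero] at hj; omega
        · exact h
      have h3 := Nat.le_of_dvd hjpos h2
      have := hkp.two_le
      nlinarith
    have hk0 : (k : F) ≠ 0 := by
      intro h0
      have : Fact k.Prime := ⟨hkp⟩
      have : CharP D k := by
        apply (CharP.charP_iff_prime_eq_zero hkp).mpr
        rw [← map_natCast (algebraMap F D), h0, map_zero]
      apply hene
      have := sub_pow_char_of_commute (p := k) (Commute.one_right (c ^ j))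
      rw [he1, one_pow, sub_self] at this
      exact sub_eq_zero.mp (pow_eq_zero_iff hkp.ne_zero |>.mp this)
    have hgeom : ∑ i ∈ Finset.range k, (c ^ j) ^ i = 0 := by
      have := geom_sum_mul (c ^ j) k
      rw [he1, sub_self] at this
      exact (mul_eq_zero.mp this).resolve_right (sub_ne_zero.mpr hene)
    have hgeomC : ∑ i ∈ Finset.range k, (C ^ j) ^ i = 0 := by
      apply hφinj
      rw [map_zero, map_sum, ← map_zero ρ, ← hgeom, map_sum]
      simp only [map_pow, hρc]
    apply hk k hkp hk0
    let q := Ideal.Quotient.mk (Ideal.span {π ^ 2})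
    have hq : q (π ^ 2) = 0 := Ideal.Quotient.eq_zero_iff_mem.mpr (Ideal.mem_span_singleton_self _)
    have hqs : ∀ Y : Matrix (Fin n) (Fin n) V, q.mapMatrix (π ^ 2 • Y) = 0 := by
      intro Y
      ext i j
      simp only [RingHom.mapMatrix_apply, Matrix.map_apply, Matrix.smul_apply, smul_eq_mul,
        map_mul, hq, zero_mul, Matrix.zero_apply]
    have hqC : q.mapMatrix C = 1 := by
      have h1 : q.mapMatrix U = 1 := by rw [map_add, map_one, hqs, add_zero]
      have h2 : q.mapMatrix U' = 1 := by rw [map_add, map_one, hqs, add_zero]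
      rw [map_mul, h1, ← h2, ← map_mul, hW, map_one, h2]
    have h4 := congrArg q.mapMatrix hgeomC
    rw [map_sum] at h4
    simp only [map_pow, hqC, one_pow, Finset.sum_const, Finset.card_range, map_zero] at h4
    have hn : Nonempty (Fin n) := by
      by_contra hne
      rw [not_nonempty_iff] at hne
      exact not_subsingleton (Matrix (Fin n) (Fin n) F) inferInstance
    obtain ⟨i⟩ := hn
    have h5 := congrFun (congrFun h4 i) i
    simp at h5
    rw [← map_natCast q, Ideal.Quotient.eq_zero_iff_mem, Ideal.mem_span_singleton] at h5
    exact h5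
  have h6 : a * (1 + s • x) = (1 + s • x) * a := by
    rw [hc1, one_mul] at hcmul
    rw [hconj] at hcmul
    calc a * (1 + s • x) = a * (1 + s • x) * a⁻¹ * a := by simp [ha]
      _ = _ := by rw [hcmul]
  rw [mul_add, add_mul, mul_one, one_mul, add_right_inj, mul_smul_comm, smul_mul_assoc] at h6
  exact smul_right_injective D hs0 h6

/-- Existence of a valuation subring with a given non-unit. -/
lemma aux_val {F : Type*} [Field F] (A : Subring F) (t : A) (ht : ¬ IsUnit t) :
    ∃ V : ValuationSubring F, ∃ π : V, (π : F) = t ∧ ¬ IsUnit π := by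
  obtain ⟨V, hAV, hV⟩ := Ideal.image_subset_nonunits_valuationSubring (Ideal.span {t})
    (by rwa [Ne, Ideal.span_singleton_eq_top])
  have h1 : (t : F) ∈ V.nonunits := hV ⟨t, Ideal.mem_span_singleton_self t, rfl⟩
  obtain ⟨h2, h3⟩ := ValuationSubring.mem_nonunits_iff_exists_mem_maximalIdeal.mp h1
  exact ⟨V, ⟨t, h2⟩, rfl, h3⟩

lemma aux_finite {F D : Type*} [Field F] [DivisionRing D] [Algebra F D]
    [FiniteDimensional F D] (a : D) (ha : a ≠ 0)
    (htor : ∀ x : D, x ≠ 0 → ∃ m : ℕ, 0 < m ∧ (x * a * x⁻¹ * a⁻¹) ^ m = 1) (x : D) :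
    a * x = x * a := by
  classical
  let b := Module.finBasis F D
  let ρ := Algebra.leftMulMatrix b
  have hinj : Function.Injective ρ := Algebra.leftMulMatrix_injective b
  have : Nontrivial (Matrix (Fin (Module.finrank F D)) (Fin (Module.finrank F D)) F) :=
    hinj.nontrivial
  obtain ⟨p, hp⟩ := CharP.exists F
  rcases CharP.char_is_prime_or_zero F p with hpp | hp0
  · have : Fact p.Prime := ⟨hpp⟩
    let : Algebra (ZMod p) F := ZMod.algebra F p
    by_cases halg : Algebra.IsAlgebraic (ZMod p) F
    · let G : Set F := Set.range (fun i : Fin _ × Fin _ => ρ a i.1 i.2) ∪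
        Set.range (fun i : Fin _ × Fin _ => ρ x i.1 i.2)
      have hG : G.Finite := (Set.finite_range _).union (Set.finite_range _)
      let A : Subalgebra (ZMod p) F := Algebra.adjoin (ZMod p) G
      have hAfg : A.toSubmodule.FG :=
        fg_adjoin_of_finite hG (fun y _ => (halg.isAlgebraic y).isIntegral)
      have : Module.Finite (ZMod p) A := Module.Finite.iff_fg.mpr hAfg
      have : Finite A := Module.finite_of_finite (ZMod p)
      let M : Subring D :=
        (Subring.comap ρ.toRingHom ((algebraMap A F).mapMatrix.range :
          Subring (Matrix (Fin (Module.finrank F D)) (Fin (Module.finrank F D)) F)))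
      have hfinM : Finite M := by
        have h1 : (Set.range ((algebraMap A F).mapMatrix :
            Matrix (Fin (Module.finrank F D)) (Fin (Module.finrank F D)) A →+*
            Matrix (Fin (Module.finrank F D)) (Fin (Module.finrank F D)) F)).Finite :=
          Set.finite_range _
        exact Set.Finite.to_subtype (h1.preimage (f := ρ) hinj.injOn)
      have haM : a ∈ M :=
        ⟨fun i j => ⟨ρ a i j, Algebra.subset_adjoin (Or.inl ⟨(i, j), rfl⟩)⟩, by ext; rfl⟩
      have hxM : x ∈ M :=
        ⟨fun i j => ⟨ρ x i j, Algebra.subset_adjoin (Or.inr ⟨(i, j), rfl⟩)⟩, by ext; rfl⟩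
      have hcomm := (Finite.isDomain_to_isField M).mul_comm ⟨a, haM⟩ ⟨x, hxM⟩
      exact congrArg Subtype.val hcomm
    · rw [Algebra.isAlgebraic_def] at halg
      push Not at halg
      obtain ⟨t, ht⟩ := halg
      let A : Subring F := (Algebra.adjoin (ZMod p) {t}).toSubring
      have htA : t ∈ A := Algebra.self_mem_adjoin_singleton _ t
      have hnu : ¬ IsUnit (⟨t, htA⟩ : A) := by
        intro hu
        obtain ⟨w, hw⟩ := hu.exists_right_inv
        have hwA : (w : F) ∈ Algebra.adjoin (ZMod p) {t} := w.2
        rw [Algebra.adjoin_singleton_eq_range_aeval] at hwA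
        obtain ⟨f, hf⟩ := hwA
        apply ht
        refine ⟨Polynomial.X * f - 1, ?_, ?_⟩
        · intro h0
          have := congrArg (Polynomial.eval 0) h0
          simp at this
        · have := congrArg Subtype.val hw
          simp only [Subring.coe_mul, Subring.coe_one] at this
          have hf' : (Polynomial.aeval t) f = (w : F) := hf
          rw [map_sub, map_mul, Polynomial.aeval_X, map_one, hf', this, sub_self]
      obtain ⟨V, π, hπ, hπu⟩ := aux_val A ⟨t, htA⟩ hnu
      have hπ0 : π ≠ 0 := by
        rintro rfl
        apply ht
        have : t = 0 := by simpa using hπ.symm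
        rw [this]
        exact isAlgebraic_zero
      refine aux_core ρ.toRingHom (fun s y => map_smul ρ s y) V π hπ0 hπu ?_ a ha htor x
      intro k hkp hk0 hdvd
      apply hπu
      have hcop : IsUnit (k : V) := by
        have hc : Nat.Coprime k p := by
          rw [Nat.coprime_primes hkp hpp]
          rintro rfl
          exact hk0 (CharP.cast_eq_zero F k)
        have h1 := Int.isCoprime_iff_gcd_eq_one.mpr (by simpa using hc : Int.gcd (k : ℤ) (p : ℤ) = 1)
        obtain ⟨u, v, huv⟩ := h1
        have h2 := congrArg (Int.cast : ℤ → V) huv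
        push_cast at h2
        have hp0 : (p : V) = 0 := by
          apply Subtype.val_injective
          push_cast
          exact CharP.cast_eq_zero F p
        rw [hp0, mul_zero, add_zero] at h2
        exact IsUnit.of_mul_eq_one_right _ h2
      exact isUnit_of_dvd_unit ((dvd_pow_self π two_ne_zero).trans hdvd) hcop
  · subst hp0
    have : CharZero F := CharP.charP_to_charZero F
    let A : Subring F := (Int.castRingHom F).range
    have h2A : (2 : F) ∈ A := ⟨2, by simp⟩
    have hnu : ¬ IsUnit (⟨2, h2A⟩ : A) := by
      intro hu
      obtain ⟨⟨w, z, hz⟩, hw⟩ := hu.exists_right_inv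
      have := congrArg Subtype.val hw
      simp only [Subring.coe_mul, Subring.coe_one] at this
      rw [← hz] at this
      have h3 : ((2 * z : ℤ) : F) = ((1 : ℤ) : F) := by push_cast; simpa using this
      have := Int.cast_injective h3
      omega
    obtain ⟨V, π, hπ, hπu⟩ := aux_val A ⟨2, h2A⟩ hnu
    have hπ2 : π = 2 := Subtype.val_injective hπ
    subst hπ2
    have h20 : (2 : V) ≠ 0 := by
      intro h
      have := congrArg (fun v : V => (v : F)) h
      rw [hπ] at this
      simp at this
    refine aux_core ρ.toRingHom (fun s y => map_smul ρ s y) V 2 h20 hπu ?_ a ha htor x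
    intro k hkp hk0 hdvd
    apply hπu
    rcases hkp.eq_two_or_odd' with rfl | ⟨r, hr⟩
    · obtain ⟨w, hw⟩ := hdvd
      have h1 : (2 : V) * (2 * w) = 2 * 1 := by
        push_cast at hw
        rw [mul_one]; nth_rewrite 3 [hw]; ring
      exact IsUnit.of_mul_eq_one _ (mul_left_cancel₀ h20 h1)
    · subst hr
      have h1 := (dvd_pow_self (2 : V) two_ne_zero).trans hdvd
      push_cast at h1
      exact isUnit_of_dvd_one ((dvd_add_right (Dvd.intro _ rfl)).mp h1)

/-- Let `D` be a weakly locally finite division ring with center `F` and `K` a proper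
division subring of `D`. Then every normal subgroup of `D*` that is radical over `K`
is contained in `F`. -/
theorem normal_radical_over_proper_subring_is_central (D : Type*) [DivisionRing D]
    (h : IsWeaklyLocallyFinite D) (K : Subfield D) (hK : K ≠ ⊤)
    (N : Subgroup Dˣ) (hN : N.Normal)
    (hrad : ∀ x ∈ N, ∃ m : ℕ, 0 < m ∧ ((x : Dˣ) : D) ^ m ∈ K) :
    ∀ x ∈ N, ((x : Dˣ) : D) ∈ Subring.center D := by
  classical
  intro a haN
  rw [Subring.mem_center_iff]
  intro b
  let S : Finset D := {(a : D), b}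
  let E := Subfield.closure (S : Set D)
  have hfin : Module.Finite (Subring.center E) E := h S
  have haE : (a : D) ∈ E := Subfield.subset_closure (by simp [S])
  have hbE : b ∈ E := Subfield.subset_closure (by simp [S])
  have hcent : ∀ (n : Dˣ), n ∈ N → ∃ m : ℕ, 0 < m ∧ ∀ y ∈ E, Commute ((n : D) ^ m) y := by
    intro n hn
    obtain ⟨m1, hm1, h1⟩ := aux_power_commute K hK N hN hrad n hn a
    obtain ⟨m2, hm2, h2⟩ := aux_power_commute K hK N hN hrad n hn b
    refine ⟨m1 * m2, by positivity, fun y hy => ?_⟩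
    have h1' : Commute ((n : D) ^ (m1 * m2)) (a : D) := by rw [pow_mul]; exact h1.pow_left _
    have h2' : Commute ((n : D) ^ (m1 * m2)) b := by
      rw [mul_comm, pow_mul]; exact h2.pow_left _
    induction hy using Subfield.closure_induction with
    | mem y hy =>
      simp only [S, Finset.coe_insert, Finset.coe_singleton, Set.mem_insert_iff,
        Set.mem_singleton_iff] at hy
      rcases hy with rfl | rfl
      · exact h1'
      · exact h2'
    | one => exact Commute.one_right _
    | add y z _ _ hy hz => exact hy.add_right hz
    | neg y _ hy => exact hy.neg_right
    | inv y _ hy => exact hy.inv_right₀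
    | mul y z _ _ hy hz => exact hy.mul_right hz
  let a' : E := ⟨a, haE⟩
  have ha' : a' ≠ 0 := fun h0 => a.ne_zero (congrArg Subtype.val h0)
  have key := aux_finite (F := Subring.center E) a' ha' ?_ ⟨b, hbE⟩
  · exact (congrArg Subtype.val key).symm
  · intro x hx
    have hx' : (x : D) ≠ 0 := fun h0 => hx (Subtype.val_injective h0)
    let xu : Dˣ := Units.mk0 (x : D) hx'
    have hmem : xu * a * xu⁻¹ * a⁻¹ ∈ N := N.mul_mem (hN.conj_mem a haN xu) (N.inv_mem haN)
    obtain ⟨m, hm, hcm⟩ := hcent _ hmem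
    set c : E := x * a' * x⁻¹ * a'⁻¹ with hc
    have hcD : ((xu * a * xu⁻¹ * a⁻¹ : Dˣ) : D) = (c : D) := by simp [hc, xu, a']
    rw [hcD] at hcm
    have hcen : c ^ m ∈ Subring.center E := by
      rw [Subring.mem_center_iff]
      intro y
      apply Subtype.val_injective
      push_cast
      exact ((hcm y y.2).eq).symm
    have hnorm : Algebra.norm (Subring.center E) c = 1 := by
      have h1 : c * (a' * x) = x * a' := by
        rw [hc]; simp [mul_assoc, ha', hx]
      have h2 := congrArg (Algebra.norm (Subring.center E)) h1
      rw [map_mul _ c, map_mul _ a', map_mul _ x, mul_comm (Algebra.norm _ x)] at h2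
      refine mul_right_cancel₀ ?_ (h2.trans (one_mul _).symm)
      have hu : ∀ z : E, z ≠ 0 → Algebra.norm (Subring.center E) z ≠ 0 := fun z hz =>
        ((IsUnit.mk0 z hz).map (Algebra.norm (Subring.center E))).ne_zero
      exact mul_ne_zero (hu _ ha') (hu _ hx)
    let l : Subring.center E := ⟨c ^ m, hcen⟩
    have hl : algebraMap (Subring.center E) E l = c ^ m := rfl
    have h3 : l ^ Module.finrank (Subring.center E) E = 1 := by
      have h4 := Algebra.norm_algebraMap_of_basis (Module.finBasis (Subring.center E) E) l
      rw [hl, map_pow, hnorm, one_pow, Fintype.card_fin] at h4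
      exact h4.symm
    refine ⟨m * Module.finrank (Subring.center E) E, Nat.mul_pos hm Module.finrank_pos, ?_⟩
    rw [pow_mul, ← hl, ← map_pow, h3, map_one]
end
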